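/- There exists a state ρ^{ABCD} of a quadripartite quantum system on finite-dimensional Hilbert spaces satisfying all three constraints I(A;C|B) = 0, I(C;B|A) = 0 and I(A;B|D) = 0 for which the inequality of the main theorem is tight with nonzero value: I(C;D) = I(C;AB) > 0. For instance, any state of the form ρ^{ABCD} = ⊕_j q_j · ρ_j^A ⊗ σ_j^B ⊗ τ_j^C ⊗ ζ_j^D with the states τ_j^C mutually orthogonal (and at least two sectors with q_j > 0) has this property. -/

import Mathlib

/-!
The witness is the classically correlated four-qubit state
`½ (|0000⟩⟨0000| + |1111⟩⟨1111|)`, i.e. two equiprobable product sectors which every party can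
distinguish. Every marginal on a nonempty set of parties is again diagonal with exactly two nonzero
entries, both equal to `1/2`, hence has entropy `1` (`vNEntropy_eq_one`). Each conditional mutual
information in the statement is therefore `1 + 1 - 1 - 1 = 0`, and both mutual informations are
`1 + 1 - 1 = 1`.
-/

open scoped BigOperators ComplexOrder

/-- Von Neumann entropy (base 2) of a matrix: for a Hermitian matrix, the Shannon
entropy of its eigenvalues; junk value `0` for non-Hermitian matrices. -/
noncomputable def vNEntropy {n : Type*} [Fintype n] [DecidableEq n] (M : Matrix n n ℂ) : ℝ :=
  if h : M.IsHermitian then -∑ i, (h.eigenvalues i) * Real.logb 2 (h.eigenvalues i) else 0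

/-- A density matrix: positive semidefinite with trace one. -/
def IsState {n : Type*} [Fintype n] [DecidableEq n] (M : Matrix n n ℂ) : Prop :=
  M.PosSemidef ∧ M.trace = 1

section Quad

variable {A B C D : Type*} [Fintype A] [DecidableEq A] [Fintype B] [DecidableEq B]
  [Fintype C] [DecidableEq C] [Fintype D] [DecidableEq D]
  (ρ : Matrix (A × B × C × D) (A × B × C × D) ℂ)

/-- Entropies of the 15 marginals of a quadripartite state. -/
noncomputable def SA : ℝ :=
  vNEntropy (Matrix.of fun a a' : A => ∑ b, ∑ c, ∑ d, ρ (a, b, c, d) (a', b, c, d))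
noncomputable def SB : ℝ :=
  vNEntropy (Matrix.of fun b b' : B => ∑ a, ∑ c, ∑ d, ρ (a, b, c, d) (a, b', c, d))
noncomputable def SC : ℝ :=
  vNEntropy (Matrix.of fun c c' : C => ∑ a, ∑ b, ∑ d, ρ (a, b, c, d) (a, b, c', d))
noncomputable def SD : ℝ :=
  vNEntropy (Matrix.of fun d d' : D => ∑ a, ∑ b, ∑ c, ρ (a, b, c, d) (a, b, c, d'))
noncomputable def SAB : ℝ :=
  vNEntropy (Matrix.of fun p q : A × B => ∑ c, ∑ d, ρ (p.1, p.2, c, d) (q.1, q.2, c, d))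
noncomputable def SAC : ℝ :=
  vNEntropy (Matrix.of fun p q : A × C => ∑ b, ∑ d, ρ (p.1, b, p.2, d) (q.1, b, q.2, d))
noncomputable def SAD : ℝ :=
  vNEntropy (Matrix.of fun p q : A × D => ∑ b, ∑ c, ρ (p.1, b, c, p.2) (q.1, b, c, q.2))
noncomputable def SBC : ℝ :=
  vNEntropy (Matrix.of fun p q : B × C => ∑ a, ∑ d, ρ (a, p.1, p.2, d) (a, q.1, q.2, d))
noncomputable def SBD : ℝ :=
  vNEntropy (Matrix.of fun p q : B × D => ∑ a, ∑ c, ρ (a, p.1, c, p.2) (a, q.1, c, q.2))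
noncomputable def SCD : ℝ :=
  vNEntropy (Matrix.of fun p q : C × D => ∑ a, ∑ b, ρ (a, b, p.1, p.2) (a, b, q.1, q.2))
noncomputable def SABC : ℝ :=
  vNEntropy (Matrix.of fun p q : A × B × C =>
    ∑ d, ρ (p.1, p.2.1, p.2.2, d) (q.1, q.2.1, q.2.2, d))
noncomputable def SABD : ℝ :=
  vNEntropy (Matrix.of fun p q : A × B × D =>
    ∑ c, ρ (p.1, p.2.1, c, p.2.2) (q.1, q.2.1, c, q.2.2))
noncomputable def SACD : ℝ :=
  vNEntropy (Matrix.of fun p q : A × C × D =>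
    ∑ b, ρ (p.1, b, p.2.1, p.2.2) (q.1, b, q.2.1, q.2.2))
noncomputable def SBCD : ℝ :=
  vNEntropy (Matrix.of fun p q : B × C × D =>
    ∑ a, ρ (a, p.1, p.2.1, p.2.2) (a, q.1, q.2.1, q.2.2))
noncomputable def SABCD : ℝ := vNEntropy ρ

end Quad

/-- The entropy of a real diagonal matrix is the Shannon entropy of its diagonal: the roots of the
characteristic polynomial identify the multiset of eigenvalues with that of the diagonal entries. -/
lemma vNEntropy_diagonal {n : Type*} [Fintype n] [DecidableEq n] (f : n → ℝ) :
    vNEntropy (Matrix.diagonal fun i => (f i : ℂ)) = -∑ i, f i * Real.logb 2 (f i) := by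
  have h : (Matrix.diagonal fun i => (f i : ℂ)).IsHermitian := by
    apply Matrix.isHermitian_diagonal_of_self_adjoint
    ext i
    simp
  rw [vNEntropy, dif_pos h]
  have h1 := h.roots_charpoly_eq_eigenvalues
  rw [Matrix.charpoly_diagonal, Polynomial.roots_prod _ _
    (Finset.prod_ne_zero_iff.mpr fun i _ => Polynomial.X_sub_C_ne_zero _)] at h1
  simp only [Polynomial.roots_X_sub_C, Multiset.bind_singleton] at h1
  have h2 := congrArg (fun s : Multiset ℂ =>
    (s.map fun z => z.re * Real.logb 2 z.re).sum) h1
  simp only [Multiset.map_map] at h2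
  congr 1
  simpa using h2.symm

/-- A matrix with entries in `{0, 1/2}`, encoded by their doubles `N i j : ℕ`, which is diagonal
with exactly two nonzero entries, has entropy one bit. -/
lemma vNEntropy_eq_one {n : Type*} [Fintype n] [DecidableEq n] (M : Matrix n n ℂ)
    (N : n → n → ℕ) (hM : ∀ i j, M i j = (N i j : ℂ) / 2)
    (hoff : ∀ i j, i ≠ j → N i j = 0) (hle : ∀ i, N i i ≤ 1) (htr : ∑ i, N i i = 2) :
    vNEntropy M = 1 := by
  have hdiag : M = Matrix.diagonal fun i => (((N i i : ℝ) / 2 : ℝ) : ℂ) := by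
    ext i j
    rw [hM]
    by_cases hij : i = j
    · subst hij; simp
    · simp [hij, hoff i j hij]
  have hterm : ∀ i, (N i i : ℝ) / 2 * Real.logb 2 ((N i i : ℝ) / 2) = -((N i i : ℝ) / 2) := by
    intro i
    have h01 : N i i = 0 ∨ N i i = 1 := by have := hle i; omega
    rcases h01 with h | h
    · simp [h]
    · have : Real.logb 2 ((1 : ℝ) / 2) = -1 := by
        rw [one_div, Real.logb_inv, Real.logb_self_eq_one (by norm_num)]
      simp only [h, Nat.cast_one, this]
      norm_num
  have htr' : ∑ i, (N i i : ℝ) = 2 := by exact_mod_cast htr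
  rw [hdiag, vNEntropy_diagonal, Finset.sum_congr rfl fun i _ => hterm i,
    Finset.sum_neg_distrib, neg_neg, ← Finset.sum_div, htr']
  norm_num

/-- Twice the matrix entries of `½ (|0000⟩⟨0000| + |1111⟩⟨1111|)`. -/
def corrEntry (x y : Fin 2 × Fin 2 × Fin 2 × Fin 2) : ℕ :=
  if x = y ∧ x.1 = x.2.1 ∧ x.2.1 = x.2.2.1 ∧ x.2.2.1 = x.2.2.2 then 1 else 0

/-- The classically correlated state `½ (|0000⟩⟨0000| + |1111⟩⟨1111|)`. -/
noncomputable def corrState :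
    Matrix (Fin 2 × Fin 2 × Fin 2 × Fin 2) (Fin 2 × Fin 2 × Fin 2 × Fin 2) ℂ :=
  Matrix.of fun x y => (corrEntry x y : ℂ) / 2

lemma isState_corrState : IsState corrState := by
  have hdiag : corrState = Matrix.diagonal fun x => (corrEntry x x : ℂ) / 2 := by
    ext x y
    by_cases hxy : x = y
    · subst hxy; simp [corrState]
    · simp [corrState, corrEntry, hxy]
  constructor
  · rw [hdiag, Matrix.posSemidef_diagonal_iff]
    intro x
    positivity
  · have htr : ∑ x, corrEntry x x = 2 := by decide
    have htr' : ∑ x, (corrEntry x x : ℂ) = 2 := by exact_mod_cast htr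
    simp only [Matrix.trace, Matrix.diag, corrState, Matrix.of_apply, ← Finset.sum_div, htr']
    norm_num

/-- **Remark (the inequality can be tight with nonzero value).** There is a
quadripartite state satisfying all three constraints `I(A;C|B) = 0`,
`I(C;B|A) = 0`, `I(A;B|D) = 0` with `I(C;D) = I(C;AB) > 0`. -/
theorem exists_state_tight_inequality :
    ∃ (dA dB dC dD : ℕ)
      (ρ : Matrix (Fin dA × Fin dB × Fin dC × Fin dD)
                  (Fin dA × Fin dB × Fin dC × Fin dD) ℂ),
      IsState ρ ∧
      SAB ρ + SBC ρ - SABC ρ - SB ρ = 0 ∧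
      SAC ρ + SAB ρ - SABC ρ - SA ρ = 0 ∧
      SAD ρ + SBD ρ - SABD ρ - SD ρ = 0 ∧
      SC ρ + SD ρ - SCD ρ = SC ρ + SAB ρ - SABC ρ ∧
      0 < SC ρ + SAB ρ - SABC ρ := by
  have hA : SA corrState = 1 :=
    vNEntropy_eq_one _ (fun a a' => ∑ b, ∑ c, ∑ d, corrEntry (a, b, c, d) (a', b, c, d))
      (fun _ _ => by simp only [corrState, Matrix.of_apply, Nat.cast_sum, Finset.sum_div])
      (by decide) (by decide) (by decide)
  have hB : SB corrState = 1 :=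
    vNEntropy_eq_one _ (fun b b' => ∑ a, ∑ c, ∑ d, corrEntry (a, b, c, d) (a, b', c, d))
      (fun _ _ => by simp only [corrState, Matrix.of_apply, Nat.cast_sum, Finset.sum_div])
      (by decide) (by decide) (by decide)
  have hC : SC corrState = 1 :=
    vNEntropy_eq_one _ (fun c c' => ∑ a, ∑ b, ∑ d, corrEntry (a, b, c, d) (a, b, c', d))
      (fun _ _ => by simp only [corrState, Matrix.of_apply, Nat.cast_sum, Finset.sum_div])
      (by decide) (by decide) (by decide)
  have hD : SD corrState = 1 :=
    vNEntropy_eq_one _ (fun d d' => ∑ a, ∑ b, ∑ c, corrEntry (a, b, c, d) (a, b, c, d'))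
      (fun _ _ => by simp only [corrState, Matrix.of_apply, Nat.cast_sum, Finset.sum_div])
      (by decide) (by decide) (by decide)
  have hAB : SAB corrState = 1 :=
    vNEntropy_eq_one _ (fun p q => ∑ c, ∑ d, corrEntry (p.1, p.2, c, d) (q.1, q.2, c, d))
      (fun _ _ => by simp only [corrState, Matrix.of_apply, Nat.cast_sum, Finset.sum_div])
      (by decide) (by decide) (by decide)
  have hAC : SAC corrState = 1 :=
    vNEntropy_eq_one _ (fun p q => ∑ b, ∑ d, corrEntry (p.1, b, p.2, d) (q.1, b, q.2, d))
      (fun _ _ => by simp only [corrState, Matrix.of_apply, Nat.cast_sum, Finset.sum_div])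
      (by decide) (by decide) (by decide)
  have hAD : SAD corrState = 1 :=
    vNEntropy_eq_one _ (fun p q => ∑ b, ∑ c, corrEntry (p.1, b, c, p.2) (q.1, b, c, q.2))
      (fun _ _ => by simp only [corrState, Matrix.of_apply, Nat.cast_sum, Finset.sum_div])
      (by decide) (by decide) (by decide)
  have hBC : SBC corrState = 1 :=
    vNEntropy_eq_one _ (fun p q => ∑ a, ∑ d, corrEntry (a, p.1, p.2, d) (a, q.1, q.2, d))
      (fun _ _ => by simp only [corrState, Matrix.of_apply, Nat.cast_sum, Finset.sum_div])
      (by decide) (by decide) (by decide)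
  have hBD : SBD corrState = 1 :=
    vNEntropy_eq_one _ (fun p q => ∑ a, ∑ c, corrEntry (a, p.1, c, p.2) (a, q.1, c, q.2))
      (fun _ _ => by simp only [corrState, Matrix.of_apply, Nat.cast_sum, Finset.sum_div])
      (by decide) (by decide) (by decide)
  have hCD : SCD corrState = 1 :=
    vNEntropy_eq_one _ (fun p q => ∑ a, ∑ b, corrEntry (a, b, p.1, p.2) (a, b, q.1, q.2))
      (fun _ _ => by simp only [corrState, Matrix.of_apply, Nat.cast_sum, Finset.sum_div])
      (by decide) (by decide) (by decide)
  have hABC : SABC corrState = 1 :=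
    vNEntropy_eq_one _
      (fun p q => ∑ d, corrEntry (p.1, p.2.1, p.2.2, d) (q.1, q.2.1, q.2.2, d))
      (fun _ _ => by simp only [corrState, Matrix.of_apply, Nat.cast_sum, Finset.sum_div])
      (by decide) (by decide) (by decide)
  have hABD : SABD corrState = 1 :=
    vNEntropy_eq_one _
      (fun p q => ∑ c, corrEntry (p.1, p.2.1, c, p.2.2) (q.1, q.2.1, c, q.2.2))
      (fun _ _ => by simp only [corrState, Matrix.of_apply, Nat.cast_sum, Finset.sum_div])
      (by decide) (by decide) (by decide)
  refine ⟨2, 2, 2, 2, corrState, isState_corrState, ?_⟩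
  rw [hA, hB, hC, hD, hAB, hAC, hAD, hBC, hBD, hCD, hABC, hABD]
  norm_num
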